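/- arXiv:1306.3838 — 4 statements merged into one kernel-verified Lean document; each statement's English description precedes it below -/
import Mathlib

section
/- Let A be a ring with a set of local units E, let G be an abelian group, and let α be a partial action of G on A such that each ideal D_t has local units and such that the partial skew group ring R = A ⋆_α G is associative. Assume A is G-simple. Then for every nonzero r ∈ R and every e ∈ E there exists r' ∈ RrR (the set of finite sums of products u·r·v with u, v ∈ R) such that P_0(r') = e and #supp(r') ≤ #supp(r). -/
/-- A partial action of a group `G` on a non-unital ring `A` by two-sided ideals
`D t` and ring isomorphisms `α t : D t⁻¹ → D t` (encoded as globally defined maps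
whose behaviour only matters on the relevant ideal). -/
structure RingPartialAction (G : Type*) [Group G] (A : Type*) [NonUnitalRing A] where
  /-- The ideals `D t`, given as additive subgroups … -/
  D : G → AddSubgroup A
  /-- … which are two-sided ideals. -/
  idl_left : ∀ t (a : A), ∀ x ∈ D t, a * x ∈ D t
  idl_right : ∀ t, ∀ x ∈ D t, ∀ a : A, x * a ∈ D t
  /-- The maps `α t`, only their values on `D t⁻¹` matter. -/
  α : G → A → A
  α_mem : ∀ t, ∀ a ∈ D t⁻¹, α t a ∈ D t
  α_add : ∀ t, ∀ a ∈ D t⁻¹, ∀ b ∈ D t⁻¹, α t (a + b) = α t a + α t b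
  α_mul : ∀ t, ∀ a ∈ D t⁻¹, ∀ b ∈ D t⁻¹, α t (a * b) = α t a * α t b
  D_one : D 1 = ⊤
  α_one : ∀ a, α 1 a = a
  α_left_inv : ∀ t, ∀ a ∈ D t⁻¹, α t⁻¹ (α t a) = a
  α_mapsTo : ∀ t s, ∀ a ∈ D t⁻¹, a ∈ D s → α t a ∈ D (t * s)
  α_surjOn : ∀ t s, ∀ b ∈ D t, b ∈ D (t * s) → ∃ a, a ∈ D t⁻¹ ∧ a ∈ D s ∧ α t a = b
  α_comp : ∀ t s, ∀ a ∈ D s⁻¹, a ∈ D (s⁻¹ * t⁻¹) → α t (α s a) = α (t * s) a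

namespace RingPartialAction

variable {G : Type*} [Group G] {A : Type*} [NonUnitalRing A]

/-- The underlying additive group of the partial skew group ring `A ⋆_α G`:
finitely supported dependent functions `r` with `r t ∈ D t`,
`r = Σ_t r(t) δ_t`. -/
abbrev SkewRing (pa : RingPartialAction G A) : Type _ := Π₀ t : G, ↥(pa.D t)

/-- The element `a δ_t`. -/
noncomputable def delta [DecidableEq G] (pa : RingPartialAction G A) (t : G) (a : A)
    (ha : a ∈ pa.D t) : pa.SkewRing := DFinsupp.single t ⟨a, ha⟩

/-- `P g r`, the `g`-th coordinate projection of `r`. -/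
def P (pa : RingPartialAction G A) (g : G) (r : pa.SkewRing) : A := ↑(r g)

/-- The support of `r = Σ_t r(t) δ_t`. -/
def supp (pa : RingPartialAction G A) (r : pa.SkewRing) : Set G := {t : G | r t ≠ 0}

/-- The element `e δ_0` for `e ∈ A = D 1`. -/
noncomputable def unitDelta [DecidableEq G] (pa : RingPartialAction G A) (e : A) :
    pa.SkewRing :=
  pa.delta 1 e (by rw [pa.D_one]; exact AddSubgroup.mem_top e)

end RingPartialAction

/-- The multiplication of the partial skew group ring `A ⋆_α G`, which is *assumed*
to exist, to be biadditive, to be associative and to satisfy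
`(a δ_t)(b δ_s) = α_t(α_{t⁻¹}(a) b) δ_{ts}`. -/
structure SkewMul {G : Type*} [Group G] {A : Type*} [NonUnitalRing A] [DecidableEq G]
    (pa : RingPartialAction G A) where
  mul : pa.SkewRing → pa.SkewRing → pa.SkewRing
  left_distrib : ∀ x y z, mul x (y + z) = mul x y + mul x z
  right_distrib : ∀ x y z, mul (x + y) z = mul x z + mul y z
  mul_single : ∀ (t s : G) (a : A) (ha : a ∈ pa.D t) (b : A) (hb : b ∈ pa.D s) (g : G),
    pa.P g (mul (pa.delta t a ha) (pa.delta s b hb)) =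
      if g = t * s then pa.α t (pa.α t⁻¹ a * b) else 0
  assoc : ∀ x y z, mul (mul x y) z = mul x (mul y z)

section LocalUnits

variable (A : Type*) [NonUnitalRing A]

/-- `A` is a ring with local units. -/
def HasLocalUnits : Prop :=
  ∀ F : Finset A, ∃ e : A, e * e = e ∧ ∀ a ∈ F, e * a = a ∧ a * e = a

variable {A}

/-- `E` is a set of local units for `A`. -/
def IsLocalUnitSet (E : Set A) : Prop :=
  (∀ e ∈ E, e * e = e) ∧ ∀ F : Finset A, ∃ e ∈ E, ∀ a ∈ F, e * a = a ∧ a * e = a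

/-- The (non-unital, non-necessarily full) subring `S ⊆ A` has local units. -/
def SubsetHasLocalUnits (S : Set A) : Prop :=
  ∀ F : Finset A, (∀ a ∈ F, a ∈ S) →
    ∃ e ∈ S, e * e = e ∧ ∀ a ∈ F, e * a = a ∧ a * e = a

/-- `I` is a two-sided ideal of `A` (as a set). -/
def IsRingIdeal (I : Set A) : Prop :=
  (0 : A) ∈ I ∧ (∀ a ∈ I, ∀ b ∈ I, a + b ∈ I) ∧ (∀ a ∈ I, -a ∈ I) ∧
    (∀ a ∈ I, ∀ b : A, a * b ∈ I ∧ b * a ∈ I)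

end LocalUnits

section Invariance

variable {G : Type*} [Group G] {A : Type*} [NonUnitalRing A]

/-- `I ⊆ A` is `G`-invariant: `α t (I ∩ D t⁻¹) ⊆ I ∩ D t`. -/
def GInvariant (pa : RingPartialAction G A) (I : Set A) : Prop :=
  ∀ t : G, ∀ a ∈ I, a ∈ pa.D t⁻¹ → pa.α t a ∈ I ∧ pa.α t a ∈ pa.D t

/-- `A` is `G`-simple: the only `G`-invariant ideals of `A` are `{0}` and `A`. -/
def GSimple (pa : RingPartialAction G A) : Prop :=
  ∀ I : Set A, IsRingIdeal I → GInvariant pa I → I = {0} ∨ I = Set.univ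

variable [DecidableEq G]

/-- `J` is a two-sided ideal of the partial skew group ring. -/
def IsSkewIdeal {pa : RingPartialAction G A} (S : SkewMul pa) (J : Set pa.SkewRing) : Prop :=
  (0 : pa.SkewRing) ∈ J ∧ (∀ x ∈ J, ∀ y ∈ J, x + y ∈ J) ∧ (∀ x ∈ J, -x ∈ J) ∧
    (∀ x ∈ J, ∀ y : pa.SkewRing, S.mul x y ∈ J ∧ S.mul y x ∈ J)

/-- The corner `x R x` of the partial skew group ring. -/
def corner {pa : RingPartialAction G A} (S : SkewMul pa) (x : pa.SkewRing) :
    Set pa.SkewRing := {y | ∃ z, y = S.mul x (S.mul z x)}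

/-- `C_e`: the center of the corner `eδ_0 R eδ_0`. -/
def Ce {pa : RingPartialAction G A} (S : SkewMul pa) (e : A) : Set pa.SkewRing :=
  {x ∈ corner S (pa.unitDelta e) |
    ∀ y ∈ corner S (pa.unitDelta e), S.mul x y = S.mul y x}

end Invariance

/-!
Fix `t` in the support of `r` and let `T = supp r · t⁻¹`. The coefficients at `1` of those elements
of `RrR` whose support lies in `T` form an ideal of `A`. It contains `r(t) ≠ 0`, the coefficient at
`1` of `r · w δ_{t⁻¹}` for a suitable local unit `w` of `D_{t⁻¹}`. It is `G`-invariant, because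
conjugating by `δ_s`, cut down by a local unit of `D_{s⁻¹}`, acts as `α_s` on the coefficient at `1`
and conjugates the support, which changes nothing in an abelian group. By `G`-simplicity the ideal
is all of `A`.
-/

theorem SubsetHasLocalUnits.exists_mul_eq {A : Type*} [NonUnitalRing A] {S : Set A}
    (hS : SubsetHasLocalUnits S) {a : A} (ha : a ∈ S) : ∃ w ∈ S, w * a = a ∧ a * w = a := by
  obtain ⟨w, hw, -, hwa⟩ := hS {a} (by simpa using ha)
  exact ⟨w, hw, hwa a (Finset.mem_singleton_self a)⟩

namespace RingPartialAction

variable {G : Type*} [Group G] {A : Type*} [NonUnitalRing A] (pa : RingPartialAction G A)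

theorem mem_D_one (a : A) : a ∈ pa.D 1 := pa.D_one ▸ AddSubgroup.mem_top a

theorem α_zero (t : G) : pa.α t 0 = 0 := by
  simpa using pa.α_add t 0 (zero_mem _) 0 (zero_mem _)

theorem α_inv_mem {t : G} {a : A} (ha : a ∈ pa.D t) : pa.α t⁻¹ a ∈ pa.D t⁻¹ :=
  pa.α_mem t⁻¹ a (by rwa [inv_inv])

theorem α_inv_add {t : G} {a b : A} (ha : a ∈ pa.D t) (hb : b ∈ pa.D t) :
    pa.α t⁻¹ (a + b) = pa.α t⁻¹ a + pa.α t⁻¹ b :=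
  pa.α_add t⁻¹ a (by rwa [inv_inv]) b (by rwa [inv_inv])

theorem α_right_inv {t : G} {a : A} (ha : a ∈ pa.D t) : pa.α t (pa.α t⁻¹ a) = a := by
  simpa only [inv_inv] using pa.α_left_inv t⁻¹ a (by rwa [inv_inv])

theorem P_zero (g : G) : pa.P g 0 = 0 := rfl

theorem P_add (g : G) (x y : pa.SkewRing) : pa.P g (x + y) = pa.P g x + pa.P g y := rfl

theorem P_neg (g : G) (x : pa.SkewRing) : pa.P g (-x) = -pa.P g x := rfl

theorem P_mem (g : G) (x : pa.SkewRing) : pa.P g x ∈ pa.D g := (x g).2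

theorem mem_supp {g : G} {x : pa.SkewRing} : g ∈ pa.supp x ↔ pa.P g x ≠ 0 := by
  simp [supp, P]

theorem supp_zero : pa.supp 0 = ∅ := by
  simp [supp]

theorem supp_neg (x : pa.SkewRing) : pa.supp (-x) = pa.supp x := by
  simp [supp]

theorem supp_add_subset (x y : pa.SkewRing) : pa.supp (x + y) ⊆ pa.supp x ∪ pa.supp y := by
  intro g hg
  by_contra! h
  simp_all [mem_supp, P_add]

theorem supp_nonempty {x : pa.SkewRing} (hx : x ≠ 0) : (pa.supp x).Nonempty :=
  DFinsupp.ne_iff.1 hx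

theorem finite_supp (x : pa.SkewRing) : (pa.supp x).Finite :=
  DFinsupp.finite_support x

/-- The set of coefficients at `1` of the elements of `I` whose support lies in `T`; it is the
ideal of `A` to which `G`-simplicity is applied. -/
def identityCoeffs (I : Set pa.SkewRing) (T : Set G) : Set A :=
  pa.P 1 '' {x ∈ I | pa.supp x ⊆ T}

variable [DecidableEq G]

theorem P_delta {t : G} {a : A} (ha : a ∈ pa.D t) (g : G) :
    pa.P g (pa.delta t a ha) = if g = t then a else 0 := by
  split_ifs with h
  · subst h
    simp [P, delta]
  · simp [P, delta, DFinsupp.single_eq_of_ne h]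

@[elab_as_elim]
theorem delta_induction {p : pa.SkewRing → Prop} (x : pa.SkewRing) (zero : p 0)
    (delta_add : ∀ t a ha y, p y → p (pa.delta t a ha + y)) : p x :=
  DFinsupp.induction x zero fun t a y _ _ hy => delta_add t a a.2 y hy

end RingPartialAction

namespace SkewMul

open RingPartialAction

variable {G : Type*} [Group G] [DecidableEq G] {A : Type*} [NonUnitalRing A]
  {pa : RingPartialAction G A} (S : SkewMul pa)

protected theorem mul_zero (x : pa.SkewRing) : S.mul x 0 = 0 :=
  map_zero (AddMonoidHom.mk' (S.mul x) (S.left_distrib x))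

protected theorem zero_mul (x : pa.SkewRing) : S.mul 0 x = 0 :=
  map_zero (AddMonoidHom.mk' (S.mul · x) (S.right_distrib · · x))

protected theorem neg_mul (x y : pa.SkewRing) : S.mul (-x) y = -S.mul x y :=
  map_neg (AddMonoidHom.mk' (S.mul · y) (S.right_distrib · · y)) x

theorem P_delta_mul {t : G} {a : A} (ha : a ∈ pa.D t) (x : pa.SkewRing) (h : G) :
    pa.P (t * h) (S.mul (pa.delta t a ha) x) = pa.α t (pa.α t⁻¹ a * pa.P h x) := by
  have mul_mem (b : A) : pa.α t⁻¹ a * b ∈ pa.D t⁻¹ := pa.idl_right _ _ (pa.α_inv_mem ha) b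
  induction x using pa.delta_induction with
  | zero => simp only [S.mul_zero, P_zero, mul_zero, α_zero]
  | delta_add s b hb y ih =>
    rw [S.left_distrib, P_add, P_add, ih, mul_add, pa.α_add t _ (mul_mem _) _ (mul_mem _),
      S.mul_single, P_delta]
    congr 1
    simp only [mul_right_inj]
    split_ifs <;> simp [α_zero]

theorem P_mul_delta {s : G} {b : A} (hb : b ∈ pa.D s) (x : pa.SkewRing) (h : G) :
    pa.P (h * s) (S.mul x (pa.delta s b hb)) = pa.α h (pa.α h⁻¹ (pa.P h x) * b) := by
  have mul_mem (y : pa.SkewRing) : pa.α h⁻¹ (pa.P h y) * b ∈ pa.D h⁻¹ :=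
    pa.idl_right _ _ (pa.α_inv_mem (pa.P_mem h y)) b
  induction x using pa.delta_induction with
  | zero => simp only [S.zero_mul, P_zero, zero_mul, α_zero]
  | delta_add t a ha y ih =>
    rw [S.right_distrib, P_add, P_add, ih, pa.α_inv_add (pa.P_mem _ _) (pa.P_mem _ _), add_mul,
      pa.α_add h _ (mul_mem _) _ (mul_mem _), S.mul_single, P_delta]
    congr 1
    simp only [mul_left_inj]
    split_ifs with hht
    · rw [hht]
    · simp only [α_zero, zero_mul]

theorem supp_delta_mul_subset {t : G} {a : A} (ha : a ∈ pa.D t) (x : pa.SkewRing) :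
    pa.supp (S.mul (pa.delta t a ha) x) ⊆ (t⁻¹ * ·) ⁻¹' pa.supp x := by
  intro g hg
  rw [mem_supp, ← mul_inv_cancel_left t g, P_delta_mul] at hg
  rw [Set.mem_preimage, mem_supp]
  intro hx
  rw [hx, mul_zero, α_zero] at hg
  exact hg rfl

theorem supp_mul_delta_subset {s : G} {b : A} (hb : b ∈ pa.D s) (x : pa.SkewRing) :
    pa.supp (S.mul x (pa.delta s b hb)) ⊆ (· * s⁻¹) ⁻¹' pa.supp x := by
  intro g hg
  rw [mem_supp, ← inv_mul_cancel_right g s, P_mul_delta] at hg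
  rw [Set.mem_preimage, mem_supp]
  intro hx
  rw [hx, α_zero, zero_mul, α_zero] at hg
  exact hg rfl

theorem P_unitDelta_mul (a : A) (x : pa.SkewRing) (g : G) :
    pa.P g (S.mul (pa.unitDelta a) x) = a * pa.P g x := by
  simpa only [unitDelta, one_mul, inv_one, pa.α_one] using
    S.P_delta_mul (t := 1) (a := a) (pa.mem_D_one a) x g

theorem P_one_mul_unitDelta (x : pa.SkewRing) (a : A) :
    pa.P 1 (S.mul x (pa.unitDelta a)) = pa.P 1 x * a := by
  simpa only [unitDelta, one_mul, inv_one, pa.α_one] using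
    S.P_mul_delta (s := 1) (b := a) (pa.mem_D_one a) x 1

theorem supp_unitDelta_mul_subset (a : A) (x : pa.SkewRing) :
    pa.supp (S.mul (pa.unitDelta a) x) ⊆ pa.supp x := by
  simpa only [unitDelta, inv_one, one_mul, Set.preimage_id'] using
    S.supp_delta_mul_subset (t := 1) (a := a) (pa.mem_D_one a) x

theorem supp_mul_unitDelta_subset (x : pa.SkewRing) (a : A) :
    pa.supp (S.mul x (pa.unitDelta a)) ⊆ pa.supp x := by
  simpa only [unitDelta, inv_one, mul_one, Set.preimage_id'] using
    S.supp_mul_delta_subset (s := 1) (b := a) (pa.mem_D_one a) x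

theorem P_one_mul_delta_inv {t : G} {w : A} (hw : w ∈ pa.D t⁻¹) {x : pa.SkewRing}
    (hxw : pa.α t⁻¹ (pa.P t x) * w = pa.α t⁻¹ (pa.P t x)) :
    pa.P 1 (S.mul x (pa.delta t⁻¹ w hw)) = pa.P t x := by
  rw [← mul_inv_cancel t, P_mul_delta, hxw, pa.α_right_inv (pa.P_mem t x)]

theorem P_one_conj {s : G} {w : A} (hw : w ∈ pa.D s⁻¹) {x : pa.SkewRing}
    (hwx : w * pa.P 1 x = pa.P 1 x) (hxw : pa.P 1 x * w = pa.P 1 x) :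
    pa.P 1 (S.mul (S.mul (pa.delta s (pa.α s w) (pa.α_mem s w hw)) x) (pa.delta s⁻¹ w hw)) =
      pa.α s (pa.P 1 x) := by
  have hx : pa.P 1 x ∈ pa.D s⁻¹ := hwx ▸ pa.idl_right _ _ hw _
  have hPs : pa.P s (S.mul (pa.delta s (pa.α s w) (pa.α_mem s w hw)) x) = pa.α s (pa.P 1 x) := by
    simpa only [mul_one, pa.α_left_inv s w hw, hwx] using S.P_delta_mul (pa.α_mem s w hw) x 1
  rw [S.P_one_mul_delta_inv hw, hPs]
  rw [hPs, pa.α_left_inv s _ hx, hxw]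

theorem supp_conj_subset {s : G} {a b : A} (ha : a ∈ pa.D s) (hb : b ∈ pa.D s⁻¹)
    (x : pa.SkewRing) :
    pa.supp (S.mul (S.mul (pa.delta s a ha) x) (pa.delta s⁻¹ b hb)) ⊆
      (s⁻¹ * · * s) ⁻¹' pa.supp x := by
  intro g hg
  simpa [mul_assoc] using S.supp_delta_mul_subset ha x (S.supp_mul_delta_subset hb _ hg)

/-- The two-sided ideal `RrR` of finite sums of products `u r v` in the skew group ring `R`. An
additive submonoid closure suffices to define it, since `-(u r v) = (-u) r v`. -/
def sandwichSpan (r : pa.SkewRing) : AddSubmonoid pa.SkewRing :=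
  AddSubmonoid.closure {x | ∃ u v, x = S.mul u (S.mul r v)}

theorem mul_mul_mem_sandwichSpan (u r v : pa.SkewRing) :
    S.mul u (S.mul r v) ∈ S.sandwichSpan r :=
  AddSubmonoid.subset_closure ⟨u, v, rfl⟩

theorem neg_mem_sandwichSpan {r x : pa.SkewRing} (hx : x ∈ S.sandwichSpan r) :
    -x ∈ S.sandwichSpan r := by
  induction hx using AddSubmonoid.closure_induction with
  | mem _ h =>
    obtain ⟨u, v, rfl⟩ := h
    exact S.neg_mul u _ ▸ S.mul_mul_mem_sandwichSpan (-u) r v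
  | zero => simp only [neg_zero, zero_mem]
  | add y z _ _ hy hz => exact neg_add y z ▸ add_mem hy hz

theorem mul_mem_sandwichSpan_right {r x : pa.SkewRing} (hx : x ∈ S.sandwichSpan r)
    (y : pa.SkewRing) : S.mul x y ∈ S.sandwichSpan r := by
  induction hx using AddSubmonoid.closure_induction with
  | mem _ h =>
    obtain ⟨u, v, rfl⟩ := h
    rw [S.assoc, S.assoc]
    exact S.mul_mul_mem_sandwichSpan u r (S.mul v y)
  | zero => simp only [S.zero_mul, zero_mem]
  | add a b _ _ ha hb => exact S.right_distrib a b y ▸ add_mem ha hb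

theorem mul_mem_sandwichSpan_left {r x : pa.SkewRing} (hx : x ∈ S.sandwichSpan r)
    (y : pa.SkewRing) : S.mul y x ∈ S.sandwichSpan r := by
  induction hx using AddSubmonoid.closure_induction with
  | mem _ h =>
    obtain ⟨u, v, rfl⟩ := h
    rw [← S.assoc]
    exact S.mul_mul_mem_sandwichSpan (S.mul y u) r v
  | zero => simp only [S.mul_zero, zero_mem]
  | add a b _ _ ha hb => exact S.left_distrib y a b ▸ add_mem ha hb

theorem isSkewIdeal_sandwichSpan (r : pa.SkewRing) :
    IsSkewIdeal S (S.sandwichSpan r : Set pa.SkewRing) :=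
  ⟨zero_mem _, fun _ hx _ hy => add_mem hx hy, fun _ hx => S.neg_mem_sandwichSpan hx,
    fun _ hx y => ⟨S.mul_mem_sandwichSpan_right hx y, S.mul_mem_sandwichSpan_left hx y⟩⟩

theorem P_mem_identityCoeffs_sandwichSpan (hD : ∀ t : G, SubsetHasLocalUnits (pa.D t : Set A))
    (r : pa.SkewRing) (t : G) :
    pa.P t r ∈ pa.identityCoeffs (S.sandwichSpan r : Set pa.SkewRing) ((· * t) ⁻¹' pa.supp r) := by
  obtain ⟨w, hw, -, hrw⟩ := (hD t⁻¹).exists_mul_eq (pa.α_inv_mem (pa.P_mem t r))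
  obtain ⟨u, -, hur, -⟩ := (hD t).exists_mul_eq (pa.P_mem t r)
  refine ⟨S.mul (pa.unitDelta u) (S.mul r (pa.delta t⁻¹ w hw)),
    ⟨S.mul_mul_mem_sandwichSpan _ _ _, ?_⟩, ?_⟩
  · simpa only [inv_inv] using
      (S.supp_unitDelta_mul_subset u _).trans (S.supp_mul_delta_subset hw r)
  · rw [P_unitDelta_mul, S.P_one_mul_delta_inv hw hrw, hur]

end SkewMul

section IdentityCoeffs

open RingPartialAction

variable {G : Type*} [Group G] [DecidableEq G] {A : Type*} [NonUnitalRing A]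
  {pa : RingPartialAction G A} {S : SkewMul pa} {I : Set pa.SkewRing}

theorem IsSkewIdeal.isRingIdeal_identityCoeffs (hI : IsSkewIdeal S I) (T : Set G) :
    IsRingIdeal (pa.identityCoeffs I T) := by
  obtain ⟨zero_mem, add_mem, neg_mem, mul_mem⟩ := hI
  refine ⟨⟨0, ⟨zero_mem, ?_⟩, P_zero _ _⟩, ?_, ?_, ?_⟩
  · simp [supp_zero]
  · rintro _ ⟨x, ⟨hxI, hxT⟩, rfl⟩ _ ⟨y, ⟨hyI, hyT⟩, rfl⟩
    exact ⟨x + y, ⟨add_mem x hxI y hyI, (supp_add_subset _ x y).trans (Set.union_subset hxT hyT)⟩,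
      P_add _ _ x y⟩
  · rintro _ ⟨x, ⟨hxI, hxT⟩, rfl⟩
    exact ⟨-x, ⟨neg_mem x hxI, (supp_neg _ x).trans_subset hxT⟩, P_neg _ _ x⟩
  · rintro _ ⟨x, ⟨hxI, hxT⟩, rfl⟩ b
    exact ⟨⟨S.mul x (pa.unitDelta b),
        ⟨(mul_mem x hxI _).1, (S.supp_mul_unitDelta_subset x b).trans hxT⟩,
        S.P_one_mul_unitDelta x b⟩,
      ⟨S.mul (pa.unitDelta b) x,
        ⟨(mul_mem x hxI _).2, (S.supp_unitDelta_mul_subset b x).trans hxT⟩,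
        S.P_unitDelta_mul b x 1⟩⟩

theorem IsSkewIdeal.gInvariant_identityCoeffs (hI : IsSkewIdeal S I)
    (hD : ∀ t : G, SubsetHasLocalUnits (pa.D t : Set A)) {T : Set G}
    (hT : ∀ s, ∀ g ∈ T, s * g * s⁻¹ ∈ T) : GInvariant pa (pa.identityCoeffs I T) := by
  rintro s _ ⟨x, ⟨hxI, hxT⟩, rfl⟩ hxs
  obtain ⟨w, hw, hwx, hxw⟩ := (hD s⁻¹).exists_mul_eq hxs
  refine ⟨⟨_, ⟨?_, fun g hg => ?_⟩, S.P_one_conj hw hwx hxw⟩, pa.α_mem s _ hxs⟩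
  · exact (hI.2.2.2 _ (hI.2.2.2 x hxI _).2 _).1
  · have hgT : s⁻¹ * g * s ∈ T := hxT (S.supp_conj_subset _ hw x hg)
    simpa [mul_assoc] using hT s _ hgT

theorem GSimple.identityCoeffs_eq_univ (hsimple : GSimple pa) (hI : IsSkewIdeal S I)
    (hD : ∀ t : G, SubsetHasLocalUnits (pa.D t : Set A)) {T : Set G}
    (hT : ∀ s, ∀ g ∈ T, s * g * s⁻¹ ∈ T) {a : A} (ha : a ∈ pa.identityCoeffs I T) (ha0 : a ≠ 0) :
    pa.identityCoeffs I T = Set.univ :=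
  (hsimple _ (hI.isRingIdeal_identityCoeffs T)
    (hI.gInvariant_identityCoeffs hD hT)).resolve_left fun h =>
      ha0 (Set.mem_singleton_iff.1 (h ▸ ha))

end IdentityCoeffs

theorem lemma_one_of_simplicity_paper_general
    {G : Type*} [CommGroup G] [DecidableEq G] {A : Type*} [NonUnitalRing A]
    (pa : RingPartialAction G A) (S : SkewMul pa)
    (hD : ∀ t : G, SubsetHasLocalUnits (pa.D t : Set A)) (hsimple : GSimple pa)
    {r : pa.SkewRing} (hr : r ≠ 0) (a : A) :
    ∃ r' ∈ S.sandwichSpan r, pa.P 1 r' = a ∧ (pa.supp r').ncard ≤ (pa.supp r).ncard := by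
  obtain ⟨t, ht⟩ := pa.supp_nonempty hr
  have coeffs_eq_univ :
      pa.identityCoeffs (S.sandwichSpan r : Set pa.SkewRing) ((· * t) ⁻¹' pa.supp r) = Set.univ :=
    hsimple.identityCoeffs_eq_univ (S.isSkewIdeal_sandwichSpan r) hD
      (fun s g hg => by rwa [mul_comm s, mul_inv_cancel_right])
      (S.P_mem_identityCoeffs_sandwichSpan hD r t) (pa.mem_supp.1 ht)
  obtain ⟨r', ⟨hr', hsupp⟩, hP⟩ := coeffs_eq_univ.symm ▸ Set.mem_univ a
  exact ⟨r', hr', hP, Set.ncard_le_ncard_of_injOn (· * t) hsupp (mul_left_injective t).injOn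
    (pa.finite_supp r)⟩

theorem lemma_one_of_simplicity_paper
    {G : Type*} [CommGroup G] [DecidableEq G] {A : Type*} [NonUnitalRing A]
    (pa : RingPartialAction G A) (S : SkewMul pa)
    (E : Set A) (hE : IsLocalUnitSet E)
    (hD : ∀ t : G, SubsetHasLocalUnits (pa.D t : Set A))
    (hsimple : GSimple pa) :
    ∀ r : pa.SkewRing, r ≠ 0 → ∀ e ∈ E,
      ∃ r' ∈ AddSubmonoid.closure {x : pa.SkewRing | ∃ u v, x = S.mul u (S.mul r v)},
        pa.P 1 r' = e ∧ (pa.supp r').ncard ≤ (pa.supp r).ncard :=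
  fun _ hr e _ => lemma_one_of_simplicity_paper_general pa S hD hsimple hr e
end

section
/- Let θ = ({X_t}_{t∈G}, {h_t}_{t∈G}) be a partial action of a group G on a set X, let K be a field, and let α be the induced partial action of G on F₀(X). Then θ is minimal if and only if F₀(X) is G-simple, i.e., the only G-invariant ideals of F₀(X) are {0} and F₀(X). -/
/-- A partial action `θ = ({X_t}, {h_t})` of a group `G` on a set `X`: subsets
`Xt t ⊆ X` and bijections `h t : Xt t⁻¹ → Xt t` (encoded as globally defined maps
whose values only matter on `Xt t⁻¹`). -/
structure SetPartialAction (G : Type*) [Group G] (X : Type*) where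
  Xt : G → Set X
  h : G → X → X
  h_mem : ∀ t, ∀ x ∈ Xt t⁻¹, h t x ∈ Xt t
  Xt_one : Xt 1 = Set.univ
  h_one : ∀ x, h 1 x = x
  h_left_inv : ∀ t, ∀ x ∈ Xt t⁻¹, h t⁻¹ (h t x) = x
  h_image : ∀ t s, h t '' (Xt t⁻¹ ∩ Xt s) = Xt t ∩ Xt (t * s)
  h_comp : ∀ t s, ∀ x ∈ Xt s⁻¹, x ∈ Xt (s⁻¹ * t⁻¹) → h t (h s x) = h (t * s) x

namespace SetPartialAction

variable {G : Type*} [Group G] {X : Type*}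

/-- A subset `V ⊆ X` is `G`-invariant if `h t (V ∩ Xt t⁻¹) ⊆ V` for all `t`. -/
def Invariant (θ : SetPartialAction G X) (V : Set X) : Prop :=
  ∀ t : G, θ.h t '' (V ∩ θ.Xt t⁻¹) ⊆ V

/-- `θ` is minimal if `∅` and `X` are the only `G`-invariant subsets of `X`. -/
def Minimal (θ : SetPartialAction G X) : Prop :=
  ∀ V : Set X, θ.Invariant V → V = ∅ ∨ V = Set.univ

/-- `θ` is free if `h t x = x` for some `x ∈ Xt t⁻¹` implies `t = 1`. -/
def Free (θ : SetPartialAction G X) : Prop :=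
  ∀ t : G, ∀ x ∈ θ.Xt t⁻¹, θ.h t x = x → t = 1

end SetPartialAction
section F0

variable {G : Type*} [Group G] {X : Type*} {K : Type*} [Field K]

/-- `F₀(V)`: the finitely supported functions `X → K` vanishing off `V`,
as a subset of `F₀(X) = X →₀ K`. -/
def F0 (K : Type*) [Field K] {X : Type*} (V : Set X) : Set (X →₀ K) :=
  {f : X →₀ K | ∀ x ∉ V, f x = 0}

/-- `I` is a (two-sided) ring ideal of `F₀(X)`. -/
def IsIdealF0 {X : Type*} (K : Type*) [Field K] (I : Set (X →₀ K)) : Prop :=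
  (0 : X →₀ K) ∈ I ∧ (∀ f ∈ I, ∀ g ∈ I, f + g ∈ I) ∧ (∀ f ∈ I, -f ∈ I) ∧
    (∀ f ∈ I, ∀ g : X →₀ K, f * g ∈ I ∧ g * f ∈ I)

open Classical in
/-- The induced map `α t : F₀(X) → F₀(X)`, `α t f = f ∘ h t⁻¹` on `Xt t`,
extended by zero off `Xt t`. -/
noncomputable def amap (θ : SetPartialAction G X) (K : Type*) [Field K] (t : G)
    (f : X →₀ K) : X →₀ K :=
  Finsupp.onFinset (f.support.image (θ.h t))
    (fun x => if x ∈ θ.Xt t then f (θ.h t⁻¹ x) else 0)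
    (by
      intro x hx
      by_cases hxt : x ∈ θ.Xt t
      · simp only [hxt, if_true] at hx
        have hmem : θ.h t⁻¹ x ∈ f.support := Finsupp.mem_support_iff.mpr hx
        refine Finset.mem_image.mpr ⟨θ.h t⁻¹ x, hmem, ?_⟩
        have := θ.h_left_inv t⁻¹ x (by simpa using hxt)
        simpa using this
      · simp [hxt] at hx)

/-- `I ⊆ F₀(X)` is `G`-invariant: `α t (I ∩ D t⁻¹) ⊆ I ∩ D t`. -/
def GInvariantF0 (θ : SetPartialAction G X) (K : Type*) [Field K]
    (I : Set (X →₀ K)) : Prop :=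
  ∀ t : G, ∀ f ∈ I, f ∈ F0 K (θ.Xt t⁻¹) →
    amap θ K t f ∈ I ∧ amap θ K t f ∈ F0 K (θ.Xt t)

end F0

/-!
Multiplying `f` by a scalar multiple of the point mass at `x` isolates the coordinate `f x`, and
`K` is a field, so an ideal of `F₀(X)` contains the whole line `K · δ_x` as soon as one of its
members is nonzero at `x`. Hence the ideals are exactly the `F₀(V)` with `V ⊆ X`. Since `α_t`
transports values along the bijection `h_t`, the ideal `F₀(V)` is `G`-invariant if and only if `V`
is.
-/

theorem single_mul_eq_single_mul_apply {X M : Type*} [MulZeroClass M] (x : X) (c : M)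
    (f : X →₀ M) : Finsupp.single x c * f = Finsupp.single x (c * f x) := by
  ext y
  obtain rfl | hyx := eq_or_ne y x
  · simp
  · simp [hyx]

section Ideals

variable {X K : Type*} [Field K] {V : Set X}

theorem single_mem_F0_iff {x : X} {c : K} (hc : c ≠ 0) : Finsupp.single x c ∈ F0 K V ↔ x ∈ V := by
  refine ⟨fun h ↦ by_contra fun hx ↦ hc ?_, fun hx y hy ↦ ?_⟩
  · simpa using h x hx
  · exact Finsupp.single_eq_of_ne fun hyx ↦ hy (hyx ▸ hx)

theorem F0_injective : Function.Injective (F0 K : Set X → Set (X →₀ K)) := fun V W h ↦ by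
  ext x
  rw [← single_mem_F0_iff (one_ne_zero (α := K)), h, single_mem_F0_iff one_ne_zero]

theorem F0_empty : F0 K (∅ : Set X) = {0} := by
  ext f
  simp [F0, Finsupp.ext_iff]

theorem F0_univ : F0 K (Set.univ : Set X) = Set.univ := by
  simp [F0]

theorem isIdealF0_F0 (V : Set X) : IsIdealF0 K (F0 K V) := by
  refine ⟨fun x _ ↦ rfl, fun f hf g hg x hx ↦ ?_, fun f hf x hx ↦ ?_,
    fun f hf g ↦ ⟨fun x hx ↦ ?_, fun x hx ↦ ?_⟩⟩
  · rw [Finsupp.add_apply, hf x hx, hg x hx, add_zero]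
  · rw [Finsupp.neg_apply, hf x hx, neg_zero]
  · rw [Finsupp.mul_apply, hf x hx, zero_mul]
  · rw [Finsupp.mul_apply, hf x hx, mul_zero]

namespace IsIdealF0

variable {I : Set (X →₀ K)}

theorem single_mem (hI : IsIdealF0 K I) {f : X →₀ K} (hf : f ∈ I) {x : X} (hx : f x ≠ 0) (c : K) :
    Finsupp.single x c ∈ I := by
  obtain ⟨-, -, -, hmul⟩ := hI
  have hprod : Finsupp.single x (c * (f x)⁻¹) * f ∈ I := (hmul f hf _).2
  rwa [single_mul_eq_single_mul_apply, inv_mul_cancel_right₀ hx] at hprod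

theorem mem_of_forall_single_mem (hI : IsIdealF0 K I) {f : X →₀ K}
    (hf : ∀ x ∈ f.support, Finsupp.single x (f x) ∈ I) : f ∈ I := by
  obtain ⟨hzero, hadd, -, -⟩ := hI
  rw [← f.sum_single]
  exact Finset.sum_induction _ (· ∈ I) (fun g h hg hh ↦ hadd g hg h hh) hzero hf

theorem eq_F0 (hI : IsIdealF0 K I) : I = F0 K {x | ∃ f ∈ I, f x ≠ 0} := by
  refine Set.Subset.antisymm (fun f hf x hx ↦ ?_) fun f hf ↦
    hI.mem_of_forall_single_mem fun x hx ↦ ?_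
  · exact by_contra fun hfx ↦ hx ⟨f, hf, hfx⟩
  · obtain ⟨g, hg, hgx⟩ : ∃ g ∈ I, g x ≠ 0 :=
      not_imp_comm.mp (hf x) (Finsupp.mem_support_iff.mp hx)
    exact hI.single_mem hg hgx (f x)

end IsIdealF0

theorem isIdealF0_iff_exists_eq_F0 {I : Set (X →₀ K)} : IsIdealF0 K I ↔ ∃ V, I = F0 K V :=
  ⟨fun hI ↦ ⟨_, hI.eq_F0⟩, fun ⟨V, hV⟩ ↦ hV ▸ isIdealF0_F0 V⟩

end Ideals

section Invariance

variable {G : Type*} [Group G] {X K : Type*} [Field K] (θ : SetPartialAction G X)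

theorem SetPartialAction.image_h (t : G) : θ.h t '' θ.Xt t⁻¹ = θ.Xt t := by
  simpa [θ.Xt_one] using θ.h_image t 1

theorem amap_mem_F0 (t : G) (f : X →₀ K) : amap θ K t f ∈ F0 K (θ.Xt t) :=
  fun _ hx ↦ if_neg hx

theorem amap_apply_h (t : G) (f : X →₀ K) {x : X} (hx : x ∈ θ.Xt t⁻¹) :
    amap θ K t f (θ.h t x) = f x :=
  (if_pos (θ.h_mem t x hx)).trans (congrArg f (θ.h_left_inv t x hx))

variable {θ} {V : Set X}

theorem gInvariantF0_F0_iff : GInvariantF0 θ K (F0 K V) ↔ θ.Invariant V := by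
  constructor
  · rintro hV t _ ⟨x, ⟨hxV, hxt⟩, rfl⟩
    have hmem : amap θ K t (Finsupp.single x 1) ∈ F0 K V :=
      (hV t _ ((single_mem_F0_iff one_ne_zero).mpr hxV) ((single_mem_F0_iff one_ne_zero).mpr hxt)).1
    by_contra hx
    simpa [amap_apply_h θ t _ hxt] using hmem _ hx
  · refine fun hV t f hf _ ↦ ⟨fun x hx ↦ ?_, amap_mem_F0 θ t f⟩
    by_cases hxt : x ∈ θ.Xt t
    · obtain ⟨y, hyt, rfl⟩ := (θ.image_h t).symm ▸ hxt
      rw [amap_apply_h θ t f hyt]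
      exact hf y fun hyV ↦ hx (hV t ⟨y, ⟨hyV, hyt⟩, rfl⟩)
    · exact amap_mem_F0 θ t f x hxt

end Invariance

theorem minimal_iff_GSimple
    {G : Type*} [Group G] {X : Type*} (θ : SetPartialAction G X)
    (K : Type*) [Field K] :
    θ.Minimal ↔ ∀ I : Set (X →₀ K), IsIdealF0 K I → GInvariantF0 θ K I →
      I = {0} ∨ I = Set.univ := by
  calc θ.Minimal
    _ ↔ ∀ V : Set X, GInvariantF0 θ K (F0 K V) → F0 K V = {0} ∨ F0 K V = Set.univ := by
      simp only [SetPartialAction.Minimal, gInvariantF0_F0_iff, ← F0_empty, ← F0_univ,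
        F0_injective.eq_iff]
    _ ↔ ∀ I : Set (X →₀ K), IsIdealF0 K I → GInvariantF0 θ K I → I = {0} ∨ I = Set.univ := by
      simp only [isIdealF0_iff_exists_eq_F0, forall_exists_index, forall_eq_apply_imp_iff]
end

section
/- Let θ = ({X_t}_{t∈G}, {h_t}_{t∈G}) be a free partial action of an abelian group G on a set X, let K be a field, let α be the induced partial action of G on F₀(X), and let R = F₀(X) ⋆_α G be the partial skew group ring. Let A ⊆ X be a finite subset and e = χ_A ∈ F₀(X) its characteristic function. Then every element x of C_e satisfies P_g(x) = 0 for all g ≠ e_G; that is, C_e ⊆ F₀(A)δ_0 = eF₀(X)e·δ_0. -/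
section FSkew

variable {G : Type*} [Group G] {X : Type*}

/-- The ideal `D t = F₀(X_t)` of `F₀(X)`, as an additive subgroup. -/
def Dsub (θ : SetPartialAction G X) (K : Type*) [Field K] (t : G) :
    AddSubgroup (X →₀ K) where
  carrier := F0 K (θ.Xt t)
  zero_mem' := by intro x _; simp
  add_mem' := by intro f g hf hg x hx; simp [hf x hx, hg x hx]
  neg_mem' := by intro f hf x hx; simp [hf x hx]

variable (K : Type*) [Field K]

/-- The underlying additive group of the partial skew group ring `F₀(X) ⋆_α G`. -/
abbrev SkewF0 (θ : SetPartialAction G X) (K : Type*) [Field K] : Type _ :=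
  Π₀ t : G, ↥(Dsub θ K t)

/-- The element `f δ_t` for `f ∈ D t`. -/
noncomputable def deltaF [DecidableEq G] (θ : SetPartialAction G X) (t : G)
    (f : X →₀ K) (hf : f ∈ Dsub θ K t) : SkewF0 θ K :=
  DFinsupp.single t ⟨f, hf⟩

/-- The element `f δ_0` for arbitrary `f ∈ F₀(X) = D 1`. -/
noncomputable def deltaF0 [DecidableEq G] (θ : SetPartialAction G X) (f : X →₀ K) :
    SkewF0 θ K :=
  deltaF K θ 1 f (by intro x hx; rw [θ.Xt_one] at hx; exact absurd (Set.mem_univ x) hx)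

/-- The characteristic function `χ_A ∈ F₀(X)` of a finite set `A ⊆ X`. -/
noncomputable def chi (A : Finset X) : X →₀ K := Finsupp.indicator A fun _ _ => (1 : K)

/-- The multiplication of `F₀(X) ⋆_α G`, *assumed* to exist, to be biadditive,
associative and to satisfy `(f δ_t)(g δ_s) = α_t(α_{t⁻¹}(f) g) δ_{ts}`. -/
structure FSkewMul [DecidableEq G] (θ : SetPartialAction G X) (K : Type*) [Field K] where
  mul : SkewF0 θ K → SkewF0 θ K → SkewF0 θ K
  left_distrib : ∀ x y z, mul x (y + z) = mul x y + mul x z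
  right_distrib : ∀ x y z, mul (x + y) z = mul x z + mul y z
  mul_single : ∀ (t s : G) (a : X →₀ K) (ha : a ∈ Dsub θ K t)
      (b : X →₀ K) (hb : b ∈ Dsub θ K s) (g : G),
    ((mul (deltaF K θ t a ha) (deltaF K θ s b hb)) g : X →₀ K) =
      if g = t * s then amap θ K t (amap θ K t⁻¹ a * b) else 0
  assoc : ∀ x y z, mul (mul x y) z = mul x (mul y z)

variable [DecidableEq G] {θ : SetPartialAction G X}

/-- `J` is a two-sided ideal of the partial skew group ring `F₀(X) ⋆_α G`. -/
def IsSkewIdealF0 (S : FSkewMul θ K) (J : Set (SkewF0 θ K)) : Prop :=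
  (0 : SkewF0 θ K) ∈ J ∧ (∀ x ∈ J, ∀ y ∈ J, x + y ∈ J) ∧ (∀ x ∈ J, -x ∈ J) ∧
    (∀ x ∈ J, ∀ y : SkewF0 θ K, S.mul x y ∈ J ∧ S.mul y x ∈ J)

/-- The corner `x R x` of the partial skew group ring. -/
def cornerF (S : FSkewMul θ K) (x : SkewF0 θ K) : Set (SkewF0 θ K) :=
  {y | ∃ z, y = S.mul x (S.mul z x)}

/-- `C_e` for `e = χ_A`: the center of the corner `eδ_0 R eδ_0`. -/
def CeF (S : FSkewMul θ K) (A : Finset X) : Set (SkewF0 θ K) :=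
  {x ∈ cornerF K S (deltaF0 K θ (chi K A)) |
    ∀ y ∈ cornerF K S (deltaF0 K θ (chi K A)), S.mul x y = S.mul y x}

end FSkew

/-!
For `w ∈ A` and `p = χ_{w}`, the element `p δ_0` lies in the corner, so every `x ∈ C_e` commutes
with it. Comparing `g`-th coordinates gives `P_g(x) · α_g(p) = p · P_g(x)`. Now `α_g(p)` is
`χ_{h_g(w)}`, or zero if `h_g(w)` is undefined, so for `g ≠ 1` freeness makes it vanish at `w`;
evaluating the identity at `w` yields `P_g(x)(w) = 0`.
-/

section InducedAction

variable {G : Type*} [Group G] {X : Type*} {θ : SetPartialAction G X}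
  {K : Type*} [Field K] {t : G} {v : X}

theorem amap_apply_of_mem (hv : v ∈ θ.Xt t) (f : X →₀ K) :
    amap θ K t f v = f (θ.h t⁻¹ v) :=
  if_pos hv

theorem amap_apply_of_notMem (hv : v ∉ θ.Xt t) (f : X →₀ K) : amap θ K t f v = 0 :=
  if_neg hv

theorem amap_one (f : X →₀ K) : amap θ K 1 f = f := by
  ext v
  have hv : v ∈ θ.Xt 1 := θ.Xt_one ▸ Set.mem_univ v
  rw [amap_apply_of_mem hv, inv_one, θ.h_one]

theorem amap_mul (f g : X →₀ K) :
    amap θ K t (f * g) = amap θ K t f * amap θ K t g := by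
  ext v
  by_cases hv : v ∈ θ.Xt t
  · simp only [Finsupp.mul_apply, amap_apply_of_mem hv]
  · simp only [Finsupp.mul_apply, amap_apply_of_notMem hv, mul_zero]

theorem amap_amap_inv {a : X →₀ K} (ha : a ∈ Dsub θ K t) :
    amap θ K t (amap θ K t⁻¹ a) = a := by
  ext v
  by_cases hv : v ∈ θ.Xt t
  · have hv' : v ∈ θ.Xt t⁻¹⁻¹ := by rwa [inv_inv]
    rw [amap_apply_of_mem hv, amap_apply_of_mem (θ.h_mem t⁻¹ v hv'), θ.h_left_inv t⁻¹ v hv']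
  · rw [amap_apply_of_notMem hv, ha v hv]

theorem SetPartialAction.Free.amap_single_apply_self (hfree : θ.Free) (ht : t ≠ 1)
    (w : X) (c : K) : amap θ K t (Finsupp.single w c) w = 0 := by
  by_cases hw : w ∈ θ.Xt t
  · have hmove : w ≠ θ.h t⁻¹ w := fun hfix =>
      inv_ne_one.mpr ht (hfree t⁻¹ w (by rwa [inv_inv]) hfix.symm)
    rw [amap_apply_of_mem hw, Finsupp.single_eq_of_ne' hmove]
  · exact amap_apply_of_notMem hw _

end InducedAction

section CharacteristicFunction

variable {X : Type*} {K : Type*} [Field K] {A : Finset X}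

theorem chi_apply_of_mem {v : X} (hv : v ∈ A) : chi K A v = 1 :=
  Finsupp.indicator_of_mem hv _

theorem chi_apply_of_notMem {v : X} (hv : v ∉ A) : chi K A v = 0 :=
  Finsupp.indicator_of_notMem hv _

theorem chi_mul_of_mem_F0 {f : X →₀ K} (hf : f ∈ F0 K (A : Set X)) : chi K A * f = f := by
  ext v
  by_cases hv : v ∈ A
  · rw [Finsupp.mul_apply, chi_apply_of_mem hv, one_mul]
  · rw [Finsupp.mul_apply, hf v hv, mul_zero]

theorem chi_mul_mem_F0 (f : X →₀ K) : chi K A * f ∈ F0 K (A : Set X) :=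
  fun v hv => by rw [Finsupp.mul_apply, chi_apply_of_notMem hv, zero_mul]

theorem single_mem_F0 {V : Set X} {w : X} (hw : w ∈ V) (c : K) :
    Finsupp.single w c ∈ F0 K V :=
  fun _ hv => Finsupp.single_eq_of_ne (ne_of_mem_of_not_mem hw hv).symm

end CharacteristicFunction

section SkewElements

variable {G : Type*} [Group G] {X : Type*} {θ : SetPartialAction G X}
  {K : Type*} [Field K]

theorem mem_Dsub_one (f : X →₀ K) : f ∈ Dsub θ K 1 :=
  fun v hv => absurd (θ.Xt_one ▸ Set.mem_univ v) hv

theorem SkewF0.coe_add_apply (x y : SkewF0 θ K) (g : G) :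
    ((x + y) g : X →₀ K) = x g + y g := by
  rw [DFinsupp.add_apply, AddSubgroup.coe_add]

variable [DecidableEq G]

theorem deltaF0_eq_deltaF (f : X →₀ K) : deltaF0 K θ f = deltaF K θ 1 f (mem_Dsub_one f) :=
  rfl

theorem deltaF_apply (t g : G) (a : X →₀ K) (ha : a ∈ Dsub θ K t) :
    (deltaF K θ t a ha g : X →₀ K) = if g = t then a else 0 := by
  by_cases hg : g = t
  · subst hg
    rw [deltaF, DFinsupp.single_eq_same, if_pos rfl]
  · rw [deltaF, DFinsupp.single_eq_of_ne hg, if_neg hg, ZeroMemClass.coe_zero]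

theorem deltaF_induction {p : SkewF0 θ K → Prop} (zero : p 0)
    (deltaF_add : ∀ (t : G) (a : X →₀ K) (ha : a ∈ Dsub θ K t) (y : SkewF0 θ K),
      p y → p (deltaF K θ t a ha + y)) (x : SkewF0 θ K) : p x :=
  DFinsupp.induction x zero fun t a y _ _ => deltaF_add t a a.2 y

end SkewElements

namespace FSkewMul

variable {G : Type*} [Group G] [DecidableEq G] {X : Type*} {θ : SetPartialAction G X}
  {K : Type*} [Field K] (S : FSkewMul θ K)

protected theorem mul_zero (x : SkewF0 θ K) : S.mul x 0 = 0 :=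
  (AddMonoidHom.mk' (S.mul x) (S.left_distrib x)).map_zero

protected theorem zero_mul (x : SkewF0 θ K) : S.mul 0 x = 0 :=
  (AddMonoidHom.mk' (S.mul · x) (S.right_distrib · · x)).map_zero

theorem deltaF0_mul_deltaF_apply (f : X →₀ K) (t g : G) (a : X →₀ K) (ha : a ∈ Dsub θ K t) :
    (S.mul (deltaF0 K θ f) (deltaF K θ t a ha) g : X →₀ K) = f * deltaF K θ t a ha g := by
  rw [deltaF0_eq_deltaF, S.mul_single, deltaF_apply, one_mul, inv_one, amap_one, amap_one,
    mul_ite, mul_zero]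

theorem deltaF_mul_deltaF0_apply (t g : G) (a : X →₀ K) (ha : a ∈ Dsub θ K t) (f : X →₀ K) :
    (S.mul (deltaF K θ t a ha) (deltaF0 K θ f) g : X →₀ K) =
      deltaF K θ t a ha g * amap θ K g f := by
  rw [deltaF0_eq_deltaF, S.mul_single, deltaF_apply, mul_one, amap_mul, amap_amap_inv ha]
  by_cases hg : g = t
  · rw [if_pos hg, if_pos hg, hg]
  · rw [if_neg hg, if_neg hg, zero_mul]

theorem deltaF0_mul_apply (f : X →₀ K) (x : SkewF0 θ K) (g : G) :
    (S.mul (deltaF0 K θ f) x g : X →₀ K) = f * x g := by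
  induction x using deltaF_induction with
  | zero => rw [S.mul_zero, DFinsupp.zero_apply, ZeroMemClass.coe_zero, mul_zero]
  | deltaF_add t a ha y ih =>
    rw [S.left_distrib, SkewF0.coe_add_apply, SkewF0.coe_add_apply, ih,
      S.deltaF0_mul_deltaF_apply, mul_add]

theorem mul_deltaF0_apply (x : SkewF0 θ K) (f : X →₀ K) (g : G) :
    (S.mul x (deltaF0 K θ f) g : X →₀ K) = x g * amap θ K g f := by
  induction x using deltaF_induction with
  | zero => rw [S.zero_mul, DFinsupp.zero_apply, ZeroMemClass.coe_zero, zero_mul]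
  | deltaF_add t a ha y ih =>
    rw [S.right_distrib, SkewF0.coe_add_apply, SkewF0.coe_add_apply, ih,
      S.deltaF_mul_deltaF0_apply, add_mul]

theorem deltaF0_mul_deltaF0 (f g : X →₀ K) :
    S.mul (deltaF0 K θ f) (deltaF0 K θ g) = deltaF0 K θ (f * g) := by
  refine DFinsupp.ext fun t => Subtype.ext ?_
  rw [S.deltaF0_mul_apply, deltaF0_eq_deltaF, deltaF0_eq_deltaF, deltaF_apply, deltaF_apply,
    mul_ite, mul_zero]

variable {S} {A : Finset X}

theorem deltaF0_mem_cornerF {f : X →₀ K} (hf : f ∈ F0 K (A : Set X)) :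
    deltaF0 K θ f ∈ cornerF K S (deltaF0 K θ (chi K A)) :=
  ⟨deltaF0 K θ f, by
    rw [deltaF0_mul_deltaF0, deltaF0_mul_deltaF0, mul_comm f, chi_mul_of_mem_F0 hf,
      chi_mul_of_mem_F0 hf]⟩

theorem apply_mem_F0_of_mem_cornerF {x : SkewF0 θ K}
    (hx : x ∈ cornerF K S (deltaF0 K θ (chi K A))) (g : G) :
    (x g : X →₀ K) ∈ F0 K (A : Set X) := by
  obtain ⟨z, rfl⟩ := hx
  rw [deltaF0_mul_apply]
  exact chi_mul_mem_F0 _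

theorem apply_apply_eq_zero_of_commute_single (hfree : θ.Free) {x : SkewF0 θ K} {w : X}
    (hcomm : S.mul x (deltaF0 K θ (Finsupp.single w 1)) =
      S.mul (deltaF0 K θ (Finsupp.single w 1)) x) {g : G} (hg : g ≠ 1) :
    (x g : X →₀ K) w = 0 := by
  let p : X →₀ K := Finsupp.single w 1
  have hcoord : (x g : X →₀ K) * amap θ K g p = p * x g := by
    rw [← S.mul_deltaF0_apply, hcomm, S.deltaF0_mul_apply]
  calc (x g : X →₀ K) w = (p * x g : X →₀ K) w := by simp [p]
    _ = (x g : X →₀ K) w * amap θ K g p w := by rw [← hcoord, Finsupp.mul_apply]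
    _ = 0 := by rw [hfree.amap_single_apply_self hg, mul_zero]

end FSkewMul

theorem Ce_subset_F0A_delta0_general
    {G : Type*} [Group G] [DecidableEq G] {X : Type*}
    (θ : SetPartialAction G X) (hfree : θ.Free)
    (K : Type*) [Field K] (S : FSkewMul θ K) (A : Finset X) :
    ∀ x ∈ CeF K S A,
      (∀ g : G, g ≠ 1 → ((x g : X →₀ K) = 0)) ∧
      (∀ v : X, v ∉ A → ((x (1 : G) : X →₀ K) v = 0)) := by
  rintro x ⟨hcorner, hcentral⟩
  have hsupp (g : G) : (x g : X →₀ K) ∈ F0 K (A : Set X) :=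
    FSkewMul.apply_mem_F0_of_mem_cornerF hcorner g
  refine ⟨fun g hg => Finsupp.ext fun w => ?_, hsupp 1⟩
  by_cases hw : w ∈ A
  · have hp : deltaF0 K θ (Finsupp.single w 1) ∈ cornerF K S (deltaF0 K θ (chi K A)) :=
      FSkewMul.deltaF0_mem_cornerF (single_mem_F0 hw 1)
    exact FSkewMul.apply_apply_eq_zero_of_commute_single hfree (hcentral _ hp) hg
  · exact hsupp g w hw

theorem Ce_subset_F0A_delta0
    {G : Type*} [CommGroup G] [DecidableEq G] {X : Type*}
    (θ : SetPartialAction G X) (hfree : θ.Free)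
    (K : Type*) [Field K] (S : FSkewMul θ K) (A : Finset X) :
    ∀ x ∈ CeF K S A,
      (∀ g : G, g ≠ 1 → ((x g : X →₀ K) = 0)) ∧
      (∀ v : X, v ∉ A → ((x (1 : G) : X →₀ K) v = 0)) :=
  Ce_subset_F0A_delta0_general θ hfree K S A
end

section
/- Let X be a compact Hausdorff topological space and θ = ({X_t}_{t∈G}, {h_t}_{t∈G}) a topological partial action of a group G on X such that each X_t is clopen, and let α be the induced partial action of G on the ring C(X) of continuous complex-valued functions on X. Then θ is minimal if and only if C(X) is G-simple, i.e., the only G-invariant ring ideals of C(X) are {0} and C(X). -/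
/-- A topological partial action of `G` on a topological space `X` in which every
`Xt t` is clopen: the maps `h t : Xt t⁻¹ → Xt t` are homeomorphisms, i.e.
continuous on their domains (continuity of the inverse `h t⁻¹` on `Xt t` is an
instance of the same field at `t⁻¹`). -/
structure TopPartialAction (G : Type*) [Group G] (X : Type*) [TopologicalSpace X]
    extends SetPartialAction G X where
  clopen : ∀ t, IsClopen (Xt t)
  h_cont : ∀ t, ContinuousOn (h t) (Xt t⁻¹)

namespace TopPartialAction

variable {G : Type*} [Group G] {X : Type*} [TopologicalSpace X]

/-- `θ` is minimal if `∅` and `X` are the only open `G`-invariant subsets of `X`. -/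
def Minimal (θ : TopPartialAction G X) : Prop :=
  ∀ V : Set X, IsOpen V → θ.toSetPartialAction.Invariant V → V = ∅ ∨ V = Set.univ

/-- `θ` is topologically free if for every `t ≠ 1` the set
`F_t = {x ∈ Xt t⁻¹ : h t x = x}` has empty interior. -/
def TopologicallyFree (θ : TopPartialAction G X) : Prop :=
  ∀ t : G, t ≠ 1 → interior {x ∈ θ.Xt t⁻¹ | θ.h t x = x} = ∅

/-- The ideal `D t = C(X_t) = {f ∈ C(X) : f = 0 off X_t}` of `C(X) = C(X, ℂ)`,
as an additive subgroup. -/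
noncomputable def DC (θ : TopPartialAction G X) (t : G) : AddSubgroup C(X, ℂ) where
  carrier := {f : C(X, ℂ) | ∀ x ∉ θ.Xt t, f x = 0}
  zero_mem' := by intro x _; simp
  add_mem' := by intro f g hf hg x hx; simp [hf x hx, hg x hx]
  neg_mem' := by intro f hf x hx; simp [hf x hx]

open Classical in
/-- The induced map `α t : C(X) → C(X)`, `α t f = f ∘ h t⁻¹` on `Xt t`, extended by
zero off `Xt t` (continuous since `Xt t` is clopen). -/
noncomputable def amapC (θ : TopPartialAction G X) (t : G) (f : C(X, ℂ)) : C(X, ℂ) :=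
  ⟨fun x => if x ∈ θ.Xt t then f (θ.h t⁻¹ x) else 0, by
    rw [continuous_iff_continuousAt]
    intro x
    by_cases hx : x ∈ θ.Xt t
    · have hopen : IsOpen (θ.Xt t) := (θ.clopen t).isOpen
      have hc : ContinuousOn (fun y => f (θ.h t⁻¹ y)) (θ.Xt t) := by
        apply f.continuous.comp_continuousOn
        have h1 := θ.h_cont t⁻¹
        rwa [inv_inv] at h1
      have hca := hc.continuousAt (hopen.mem_nhds hx)
      apply hca.congr
      filter_upwards [hopen.mem_nhds hx] with y hy
      simp [hy]
    · have hopen : IsOpen (θ.Xt t)ᶜ := (θ.clopen t).compl.isOpen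
      have hca : ContinuousAt (fun _ : X => (0 : ℂ)) x := continuousAt_const
      apply hca.congr
      filter_upwards [hopen.mem_nhds hx] with y hy
      simp only [Set.mem_compl_iff] at hy
      simp [hy]⟩

/-- An ideal `I ⊆ C(X)` is `G`-invariant: `α t (I ∩ D t⁻¹) ⊆ I ∩ D t`. -/
def GInvariantC (θ : TopPartialAction G X) (I : Ideal C(X, ℂ)) : Prop :=
  ∀ t : G, ∀ f ∈ I, f ∈ θ.DC t⁻¹ → θ.amapC t f ∈ I ∧ θ.amapC t f ∈ θ.DC t

/-- The underlying additive group of the partial skew group ring `C(X) ⋆_α G`. -/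
abbrev SkewC (θ : TopPartialAction G X) : Type _ := Π₀ t : G, ↥(θ.DC t)

/-- The element `f δ_t` for `f ∈ D t`. -/
noncomputable def deltaC [DecidableEq G] (θ : TopPartialAction G X) (t : G)
    (f : C(X, ℂ)) (hf : f ∈ θ.DC t) : θ.SkewC :=
  DFinsupp.single t ⟨f, hf⟩

/-- The element `f δ_0` for arbitrary `f ∈ C(X) = D 1`. -/
noncomputable def deltaC0 [DecidableEq G] (θ : TopPartialAction G X) (f : C(X, ℂ)) :
    θ.SkewC :=
  θ.deltaC 1 f (by intro x hx; rw [θ.Xt_one] at hx; exact absurd (Set.mem_univ x) hx)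

end TopPartialAction

/-- The multiplication of `C(X) ⋆_α G`, *assumed* to exist, to be biadditive,
associative and to satisfy `(f δ_t)(g δ_s) = α_t(α_{t⁻¹}(f) g) δ_{ts}`. -/
structure CSkewMul {G : Type*} [Group G] [DecidableEq G] {X : Type*}
    [TopologicalSpace X] (θ : TopPartialAction G X) where
  mul : θ.SkewC → θ.SkewC → θ.SkewC
  left_distrib : ∀ x y z, mul x (y + z) = mul x y + mul x z
  right_distrib : ∀ x y z, mul (x + y) z = mul x z + mul y z
  mul_single : ∀ (t s : G) (a : C(X, ℂ)) (ha : a ∈ θ.DC t)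
      (b : C(X, ℂ)) (hb : b ∈ θ.DC s) (g : G),
    ((mul (θ.deltaC t a ha) (θ.deltaC s b hb)) g : C(X, ℂ)) =
      if g = t * s then θ.amapC t (θ.amapC t⁻¹ a * b) else 0
  assoc : ∀ x y z, mul (mul x y) z = mul x (mul y z)

variable {G : Type*} [Group G] [DecidableEq G] {X : Type*} [TopologicalSpace X]
  {θ : TopPartialAction G X}

/-- `J` is a two-sided ideal of the partial skew group ring `C(X) ⋆_α G`. -/
def IsSkewIdealC (S : CSkewMul θ) (J : Set θ.SkewC) : Prop :=
  (0 : θ.SkewC) ∈ J ∧ (∀ x ∈ J, ∀ y ∈ J, x + y ∈ J) ∧ (∀ x ∈ J, -x ∈ J) ∧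
    (∀ x ∈ J, ∀ y : θ.SkewC, S.mul x y ∈ J ∧ S.mul y x ∈ J)

/-- The center of the partial skew group ring `C(X) ⋆_α G`. -/
def centerC (S : CSkewMul θ) : Set θ.SkewC :=
  {r | ∀ s : θ.SkewC, S.mul r s = S.mul s r}

/-!
The open support `setOfIdeal I` of an ideal and the ideal `idealOfSet ℂ V` of functions vanishing
off `V` form a Galois connection, and both constructions preserve invariance. A ring ideal `I` need
not be closed, so it is not determined by its support; but the support still detects `⊥` and `⊤`,
because a full support makes `I` dense and a proper ideal of the Banach algebra `C(X)` is never
dense.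
-/

section IdealSupport

open ContinuousMap

theorem setOfIdeal_eq_empty_iff {X R : Type*} [TopologicalSpace X] [Semiring R]
    [TopologicalSpace R] [IsTopologicalSemiring R] {I : Ideal C(X, R)} :
    setOfIdeal I = ∅ ↔ I = ⊥ := by
  rw [← Set.subset_empty_iff, ← le_bot_iff, ← idealOfEmpty_eq_bot]
  exact ideal_gc X R I ∅

theorem setOfIdeal_eq_univ_iff {X 𝕜 : Type*} [RCLike 𝕜] [TopologicalSpace X] [CompactSpace X]
    [T2Space X] {I : Ideal C(X, 𝕜)} :
    setOfIdeal I = Set.univ ↔ I = ⊤ := by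
  refine ⟨fun hI => ?_, fun hI => hI ▸ setOfTop_eq_univ⟩
  have hclosure : I.closure = ⊤ := by
    rw [← idealOfSet_ofIdeal_eq_closure, hI]
    exact (ideal_gc X 𝕜).u_top
  exact of_not_not fun hne => I.closure_ne_top hne hclosure

end IdealSupport

theorem SetPartialAction.image_Xt_inv {G X : Type*} [Group G] (θ : SetPartialAction G X) (t : G) :
    θ.h t '' θ.Xt t⁻¹ = θ.Xt t := by
  simpa [θ.Xt_one] using θ.h_image t 1

namespace TopPartialAction

variable {G X : Type*} [Group G] [TopologicalSpace X] (θ : TopPartialAction G X)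

theorem amapC_apply_of_notMem {t : G} {x : X} (hx : x ∉ θ.Xt t) (f : C(X, ℂ)) :
    θ.amapC t f x = 0 :=
  if_neg hx

theorem amapC_apply_h {t : G} {x : X} (hx : x ∈ θ.Xt t⁻¹) (f : C(X, ℂ)) :
    θ.amapC t f (θ.h t x) = f x :=
  (if_pos (θ.h_mem t x hx)).trans (congrArg f (θ.h_left_inv t x hx))

theorem amapC_mem_DC (t : G) (f : C(X, ℂ)) : θ.amapC t f ∈ θ.DC t :=
  fun _ hx => θ.amapC_apply_of_notMem hx f

theorem charFn_mul_mem_DC (t : G) (f : C(X, ℂ)) :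
    (LocallyConstant.charFn ℂ (θ.clopen t) : C(X, ℂ)) * f ∈ θ.DC t := by
  intro x hx
  simp [LocallyConstant.coe_charFn, hx]

variable {θ}

theorem GInvariantC.invariant_setOfIdeal {I : Ideal C(X, ℂ)} (hI : θ.GInvariantC I) :
    θ.Invariant (ContinuousMap.setOfIdeal I) := by
  rintro t _ ⟨x, ⟨hxI, hxt⟩, rfl⟩
  obtain ⟨f, hfI, hfx⟩ := ContinuousMap.mem_setOfIdeal.mp hxI
  -- Invariance of `I` only concerns functions supported in `Xt t⁻¹`, so `f` is first cut off there.
  let g : C(X, ℂ) := (LocallyConstant.charFn ℂ (θ.clopen t⁻¹) : C(X, ℂ)) * f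
  have hgI : θ.amapC t g ∈ I := (hI t g (I.mul_mem_left _ hfI) (θ.charFn_mul_mem_DC t⁻¹ f)).1
  have hgx : g x = f x := by simp [g, LocallyConstant.coe_charFn, hxt]
  refine ContinuousMap.mem_setOfIdeal.mpr ⟨θ.amapC t g, hgI, ?_⟩
  rwa [θ.amapC_apply_h hxt, hgx]

theorem gInvariantC_idealOfSet {V : Set X} (hV : θ.Invariant V) :
    θ.GInvariantC (ContinuousMap.idealOfSet ℂ V) := by
  refine fun t f hf _ => ⟨fun x hxV => ?_, θ.amapC_mem_DC t f⟩
  by_cases hxt : x ∈ θ.Xt t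
  · obtain ⟨y, hyt, rfl⟩ := (θ.image_Xt_inv t).ge hxt
    have hyV : y ∉ V := fun hyV => hxV (hV t ⟨y, ⟨hyV, hyt⟩, rfl⟩)
    rw [θ.amapC_apply_h hyt, hf y hyV]
  · exact θ.amapC_apply_of_notMem hxt f

end TopPartialAction

theorem topMinimal_iff_GSimple
    {G : Type*} [Group G] {X : Type*} [TopologicalSpace X] [CompactSpace X] [T2Space X]
    (θ : TopPartialAction G X) :
    θ.Minimal ↔
      ∀ I : Ideal C(X, ℂ), θ.GInvariantC I → I = ⊥ ∨ I = ⊤ := by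
  constructor
  · intro hmin I hI
    have hsupport := hmin _ (ContinuousMap.setOfIdeal_open I) hI.invariant_setOfIdeal
    exact hsupport.imp setOfIdeal_eq_empty_iff.mp setOfIdeal_eq_univ_iff.mp
  · intro hsimple V hVopen hV
    rw [← ContinuousMap.setOfIdeal_ofSet_of_isOpen ℂ hVopen, setOfIdeal_eq_empty_iff,
      setOfIdeal_eq_univ_iff]
    exact hsimple _ (TopPartialAction.gInvariantC_idealOfSet hV)
end
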